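/- Let I be an instance of (1-in-3)-SAT with variables X_1,...,X_n and m >= 3 clauses, each clause consisting of three literals on three distinct variables, and let (G_I, C_I) be the multigraph with subset conflict pairs constructed from I as described in the context. Then I admits a truth assignment under which every clause contains exactly one true literal if and only if G_I has an even orientation that violates no subset conflict pair of C_I. -/

import Mathlib

open scoped Classical

noncomputable section

/-- The indegree of vertex `v` under the head-assignment `o`. -/
def indeg {V E : Type*} (o : E → V) (v : V) : ℕ := Nat.card {e // o e = v}

/-- `o` is an orientation of the multigraph with incidence map `ends`:
every edge is directed towards one of its two endpoints (its head). -/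
def IsOrient {V E : Type*} (ends : E → V × V) (o : E → V) : Prop :=
  ∀ e, o e = (ends e).1 ∨ o e = (ends e).2

/-- Edge `e` is incident to vertex `v`. -/
def Inc {V E : Type*} (ends : E → V × V) (e : E) (v : V) : Prop :=
  (ends e).1 = v ∨ (ends e).2 = v

section Construction

variable (n m : ℕ)

/-- The edges of `G_I` other than the possible parity edge `v₀v₀'`: the cycle edges
`z_{i,l}`, the pendant edges `y_{i,l}` and `ȳ_{i,l}`, and the pendant edges `a_jc_j`. -/
def EB1 : Type :=
  (Fin n × Fin m) ⊕ (Fin n × Fin m) ⊕ (Fin n × Fin m) ⊕ Fin m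

/-- The total number of edges so far is odd, so the vertex `v₀'` and the edge `v₀v₀'`
are added. -/
def cond1 : Prop := Odd (Nat.card (EB1 n m))

/-- The edges of `G_I`. -/
def E1T : Type := EB1 n m ⊕ PLift (cond1 n m)

/-- The vertices of `G_I`: the cycle vertices `x_{i,l}`, the clause vertices `c_j`,
the pendant vertices `a_j`, the vertex `v₀`, and possibly `v₀'`. -/
def V1T : Type :=
  (Fin n × Fin m) ⊕ Fin m ⊕ Fin m ⊕ Unit ⊕ PLift (cond1 n m)

/-- The cyclic successor on `Fin m`. -/
def finSucc {m : ℕ} (l : Fin m) : Fin m :=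
  ⟨(l.val + 1) % m, Nat.mod_lt _ (by have := l.isLt; omega)⟩

/-- The cycle edge `z_{i,l}`. -/
def zE (q : Fin n × Fin m) : E1T n m := Sum.inl (Sum.inl q)

/-- The pendant edge `y_{i,l}`. -/
def yE (q : Fin n × Fin m) : E1T n m := Sum.inl (Sum.inr (Sum.inl q))

/-- The pendant edge `ȳ_{i,l}`. -/
def ybE (q : Fin n × Fin m) : E1T n m := Sum.inl (Sum.inr (Sum.inr (Sum.inl q)))

/-- `e` is one of the edges `y_{i,l}` or `ȳ_{i,l}` coming from a variable gadget. -/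
def IsVarEdge (e : E1T n m) : Prop :=
  (∃ q, e = yE n m q) ∨ (∃ q, e = ybE n m q)

variable (clauses : Fin m → Fin 3 → Fin n × Bool)

/-- The incidence map of `G_I`: `z_{i,l}` joins `x_{i,l}` to `x_{i,l+1}`; the free end of
`y_{i,j}` (resp. `ȳ_{i,j}`) is `c_j` if `X_i` occurs positively (resp. negatively) in
clause `j`, and `v₀` otherwise; `a_j` is joined to `c_j`; and possibly `v₀` to `v₀'`. -/
def ends1 : E1T n m → V1T n m × V1T n m
  | Sum.inl (Sum.inl q) => (Sum.inl q, Sum.inl (q.1, finSucc q.2))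
  | Sum.inl (Sum.inr (Sum.inl q)) =>
      (Sum.inl q,
        if ∃ t : Fin 3, clauses q.2 t = (q.1, true) then Sum.inr (Sum.inl q.2)
        else Sum.inr (Sum.inr (Sum.inr (Sum.inl ()))))
  | Sum.inl (Sum.inr (Sum.inr (Sum.inl q))) =>
      (Sum.inl q,
        if ∃ t : Fin 3, clauses q.2 t = (q.1, false) then Sum.inr (Sum.inl q.2)
        else Sum.inr (Sum.inr (Sum.inr (Sum.inl ()))))
  | Sum.inl (Sum.inr (Sum.inr (Sum.inr j))) =>
      (Sum.inr (Sum.inr (Sum.inl j)), Sum.inr (Sum.inl j))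
  | Sum.inr h =>
      (Sum.inr (Sum.inr (Sum.inr (Sum.inl ()))),
        Sum.inr (Sum.inr (Sum.inr (Sum.inr h))))

/-- The family `C_I` of subset conflict pairs: along each variable cycle the pairs
`({z_{i,l}, z_{i,l+1}}, x_{i,l+1})`, `({z_{i,l}, y_{i,l+1}}, x_{i,l+1})` and
`({z_{i,l}, ȳ_{i,l}}, x_{i,l})`, and at each clause vertex `c_j` every pair of the three
variable-gadget edges attached to it. -/
def C1 : Set (Set (E1T n m) × V1T n m) :=
  {c |
    (∃ (i : Fin n) (l : Fin m),
      c = (({zE n m (i, l), zE n m (i, finSucc l)} : Set (E1T n m)),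
            Sum.inl (i, finSucc l)) ∨
      c = (({zE n m (i, l), yE n m (i, finSucc l)} : Set (E1T n m)),
            Sum.inl (i, finSucc l)) ∨
      c = (({zE n m (i, l), ybE n m (i, l)} : Set (E1T n m)), Sum.inl (i, l))) ∨
    (∃ (j : Fin m) (e₁ e₂ : E1T n m), e₁ ≠ e₂ ∧
      IsVarEdge n m e₁ ∧ IsVarEdge n m e₂ ∧
      Inc (ends1 n m clauses) e₁ (Sum.inr (Sum.inl j)) ∧
      Inc (ends1 n m clauses) e₂ (Sum.inr (Sum.inl j)) ∧
      c = (({e₁, e₂} : Set (E1T n m)), Sum.inr (Sum.inl j)))}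

end Construction

/-!
Direct every edge `a_jc_j` to `c_j`, as evenness at `a_j` forces. Around the cycle of a variable,
the conflicts between consecutive cycle edges make the orientation consistent, and its two possible
directions are the two values of the variable. At each cycle vertex exactly one cycle edge enters;
it conflicts with the pendant edge of the true literal, so that edge leaves for its free end, and
evenness makes the pendant edge of the false literal enter. Hence an edge enters `c_j` from a
variable gadget exactly when its literal is true. At `c_j` the conflicts allow at most one such
edge and evenness, given the edge from `a_j`, requires one. Evenness at `v₀` follows from
evenness elsewhere because the number of edges is even.
-/

section Orientation

variable {V E : Type*} {ends : E → V × V} {o : E → V}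

theorem IsOrient.inc (ho : IsOrient ends o) {e : E} {v : V} (h : o e = v) : Inc ends e v :=
  (ho e).imp (fun h' => h'.symm.trans h) fun h' => h'.symm.trans h

theorem IsOrient.eq_snd_iff_ne_fst (ho : IsOrient ends o) {e : E}
    (he : (ends e).1 ≠ (ends e).2) : o e = (ends e).2 ↔ o e ≠ (ends e).1 :=
  ⟨fun h h' => he (h'.symm.trans h), (ho e).resolve_left⟩

/-- The orientation directing an edge to its second endpoint when `f` holds and to its first
endpoint otherwise. -/
def orientBy (ends : E → V × V) (f : E → Bool) (e : E) : V :=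
  bif f e then (ends e).2 else (ends e).1

theorem isOrient_orientBy (ends : E → V × V) (f : E → Bool) : IsOrient ends (orientBy ends f) :=
  fun e => by cases h : f e <;> simp only [orientBy, h, cond_true, cond_false, true_or, or_true]

theorem orientBy_eq_fst_iff {f : E → Bool} {e : E} (he : (ends e).1 ≠ (ends e).2) :
    orientBy ends f e = (ends e).1 ↔ f e = false := by
  cases h : f e <;> simp [orientBy, h, he.symm]

theorem orientBy_eq_snd_iff {f : E → Bool} {e : E} (he : (ends e).1 ≠ (ends e).2) :
    orientBy ends f e = (ends e).2 ↔ f e = true := by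
  cases h : f e <;> simp [orientBy, h, he]

theorem indeg_eq_ncard (o : E → V) (v : V) : indeg o v = {e | o e = v}.ncard := rfl

theorem even_indeg_of_eq_pair {v : V} {e₁ e₂ : E} (hne : e₁ ≠ e₂)
    (h : ∀ e, o e = v ↔ e = e₁ ∨ e = e₂) : Even (indeg o v) := by
  rw [indeg_eq_ncard, show {e | o e = v} = {e₁, e₂} from Set.ext h, Set.ncard_pair hne]
  exact even_two

theorem exists_ne_of_even_indeg {v : V} (h : Even (indeg o v)) {e : E} (he : o e = v) :
    ∃ e', e' ≠ e ∧ o e' = v := by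
  by_contra! hunique
  have hfiber : {e' | o e' = v} = {e} :=
    Set.eq_singleton_iff_unique_mem.2 ⟨he, fun e' he' => by_contra fun hne => hunique e' hne he'⟩
  rw [indeg_eq_ncard, hfiber, Set.ncard_singleton] at h
  exact Nat.not_even_one h

theorem IsOrient.even_indeg_iff_of_pendant (ho : IsOrient ends o) {v : V} {e : E}
    (hv : ∀ e', Inc ends e' v → e' = e) : Even (indeg o v) ↔ o e ≠ v := by
  refine ⟨fun h he => ?_, fun he => ?_⟩
  · obtain ⟨e', hne, he'⟩ := exists_ne_of_even_indeg h he
    exact hne (hv e' (ho.inc he'))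
  · have hfiber : {e' | o e' = v} = ∅ :=
      Set.eq_empty_of_forall_notMem fun e' he' => he (hv e' (ho.inc he') ▸ he')
    rw [indeg_eq_ncard, hfiber, Set.ncard_empty]
    exact Even.zero

theorem sum_indeg [Fintype V] [Finite E] (o : E → V) : ∑ v, indeg o v = Nat.card E := by
  rw [← Nat.card_congr (Equiv.sigmaFiberEquiv o), Nat.card_sigma]
  rfl

theorem even_indeg_of_forall_ne_even [Finite V] [Finite E] (hE : Even (Nat.card E)) {v₀ : V}
    (h : ∀ v, v ≠ v₀ → Even (indeg o v)) (v : V) : Even (indeg o v) := by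
  have := Fintype.ofFinite V
  obtain rfl | hv := eq_or_ne v v₀
  · rw [← sum_indeg o, ← Finset.add_sum_erase _ _ (Finset.mem_univ v)] at hE
    exact (Nat.even_add.1 hE).2 (Finset.even_sum _ fun w hw => h w (Finset.ne_of_mem_erase hw))
  · exact h v hv

end Orientation

theorem even_card_sum_plift_odd (α : Type*) [Finite α] :
    Even (Nat.card (α ⊕ PLift (Odd (Nat.card α)))) := by
  rw [Nat.card_sum]
  by_cases h : Odd (Nat.card α)
  · have : Unique (PLift (Odd (Nat.card α))) := ⟨⟨⟨h⟩⟩, fun _ => rfl⟩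
    rw [Nat.card_unique (α := PLift _)]
    exact h.add_one
  · have : IsEmpty (PLift (Odd (Nat.card α))) := ⟨fun h' => h h'.down⟩
    rw [Nat.card_of_isEmpty (α := PLift _), add_zero]
    exact Nat.not_odd_iff_even.1 h

section CyclicSuccessor

variable {m : ℕ}

theorem finSucc_eq_finRotate (l : Fin m) : finSucc l = finRotate m l := by
  have := l.neZero
  ext
  rw [finRotate_apply, Fin.val_add, Fin.val_one', Nat.add_mod_mod, finSucc]

theorem finSucc_ne_self (hm : m ≠ 1) (l : Fin m) : finSucc l ≠ l := by
  have hl := l.isLt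
  have hsupport : l ∈ (finRotate m).support := by
    rw [support_finRotate_of_le (by omega)]
    exact Finset.mem_univ l
  rwa [finSucc_eq_finRotate, ← Equiv.Perm.mem_support]

theorem finSucc_surjective : Function.Surjective (finSucc (m := m)) := by
  intro l
  obtain ⟨k, rfl⟩ := (finRotate m).surjective l
  exact ⟨k, finSucc_eq_finRotate k⟩

theorem of_forall_finSucc {P : Fin m → Prop} (hP : ∀ l, P l → P (finSucc l)) {l : Fin m}
    (hl : P l) (l' : Fin m) : P l' := by
  have := l.neZero
  have hiterate : l' = (finRotate m)^[(l' - l).val] l := by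
    rw [← finCycle_eq_finRotate_iterate, finCycle_apply, add_sub_cancel]
  rw [hiterate]
  exact Function.Iterate.rec P hl (fun k hk => finSucc_eq_finRotate k ▸ hP k hk) _

end CyclicSuccessor

section Gadgets

variable {n m : ℕ}

instance : Finite (EB1 n m) :=
  inferInstanceAs (Finite ((Fin n × Fin m) ⊕ (Fin n × Fin m) ⊕ (Fin n × Fin m) ⊕ Fin m))

instance : Finite (E1T n m) := inferInstanceAs (Finite (EB1 n m ⊕ PLift (cond1 n m)))

instance : Finite (V1T n m) :=
  inferInstanceAs (Finite ((Fin n × Fin m) ⊕ Fin m ⊕ Fin m ⊕ Unit ⊕ PLift (cond1 n m)))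

theorem even_card_E1T : Even (Nat.card (E1T n m)) := even_card_sum_plift_odd (EB1 n m)

/-- The cycle vertex `x_{i,l}`. -/
def xV (q : Fin n × Fin m) : V1T n m := Sum.inl q

/-- The clause vertex `c_j`. -/
def cV (j : Fin m) : V1T n m := Sum.inr (Sum.inl j)

/-- The pendant vertex `a_j`. -/
def aV (j : Fin m) : V1T n m := Sum.inr (Sum.inr (Sum.inl j))

/-- The vertex `v₀`. -/
def v₀V : V1T n m := Sum.inr (Sum.inr (Sum.inr (Sum.inl ())))

/-- The parity vertex `v₀'`. -/
def parityV (p : PLift (cond1 n m)) : V1T n m := Sum.inr (Sum.inr (Sum.inr (Sum.inr p)))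

/-- The pendant edge `a_jc_j`. -/
def aE (j : Fin m) : E1T n m := Sum.inl (Sum.inr (Sum.inr (Sum.inr j)))

/-- The parity edge `v₀v₀'`. -/
def parityE (p : PLift (cond1 n m)) : E1T n m := Sum.inr p

/-- The cycle edges at `x_{i,l}`: `z_{i,l-1}` for `true` and `z_{i,l}` for `false`. The Boolean
is the value of `X_i` for which the edge points to `x_{i,l}`. -/
def cycleEdge (b : Bool) (q : Fin n × Fin m) : E1T n m :=
  zE n m (q.1, bif b then (finRotate m).symm q.2 else q.2)

/-- The edge at `x_{i,l}` carrying the literal of `X_i` with sign `b`: `y_{i,l}` for `true`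
and `ȳ_{i,l}` for `false`. -/
def literalEdge (b : Bool) (q : Fin n × Fin m) : E1T n m := bif b then yE n m q else ybE n m q

theorem E1T.cases_gadget {motive : E1T n m → Prop} (z : ∀ q, motive (zE n m q))
    (literal : ∀ b q, motive (literalEdge b q)) (a : ∀ j, motive (aE j))
    (parity : ∀ p, motive (parityE p)) (e : E1T n m) : motive e := by
  rcases e with (q | q | q | j) | p
  exacts [z q, literal true q, literal false q, a j, parity p]

theorem xV_injective : Function.Injective (xV (n := n) (m := m)) := Sum.inl_injective

theorem cV_injective : Function.Injective (cV (n := n) (m := m)) :=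
  Sum.inr_injective.comp Sum.inl_injective

theorem literalEdge_inj {b b' : Bool} {q q' : Fin n × Fin m} :
    literalEdge b q = literalEdge b' q' ↔ b = b' ∧ q = q' := by
  refine ⟨fun h => ?_, fun ⟨hb, hq⟩ => hb ▸ hq ▸ rfl⟩
  cases b <;> cases b' <;> cases h <;> exact ⟨rfl, rfl⟩

theorem isVarEdge_iff {e : E1T n m} : IsVarEdge n m e ↔ ∃ b q, e = literalEdge b q := by
  rw [Bool.exists_bool]
  exact Or.comm

theorem cycleEdge_true_finSucc (i : Fin n) (l : Fin m) :
    cycleEdge true (i, finSucc l) = cycleEdge false (i, l) := by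
  simp only [cycleEdge, finSucc_eq_finRotate, Equiv.symm_apply_apply, cond_true, cond_false]

theorem cycleEdge_ne_literalEdge (b b' : Bool) (q q' : Fin n × Fin m) :
    cycleEdge b q ≠ literalEdge b' q' := by
  cases b' <;> nofun

theorem aE_ne_literalEdge (j : Fin m) (b : Bool) (q : Fin n × Fin m) :
    aE j ≠ literalEdge b q := by
  cases b <;> nofun

end Gadgets

section Incidence

variable {n m : ℕ} (clauses : Fin m → Fin 3 → Fin n × Bool)

/-- The free end of the pendant edge `literalEdge b q`. -/
def freeEnd (b : Bool) (q : Fin n × Fin m) : V1T n m :=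
  if ∃ t, clauses q.2 t = (q.1, b) then cV q.2 else v₀V

/-- The edge joining `c_j` to the gadget of the `t`-th literal of `C_j`. -/
def clauseEdge (j : Fin m) (t : Fin 3) : E1T n m :=
  literalEdge (clauses j t).2 ((clauses j t).1, j)

variable {clauses}

theorem clauseEdge_injective {j : Fin m} (hj : Function.Injective (clauses j)) :
    Function.Injective (clauseEdge clauses j) := by
  intro t t' h
  obtain ⟨hsign, hvertex⟩ := literalEdge_inj.1 h
  exact hj (Prod.ext (Prod.ext_iff.1 hvertex).1 hsign)

theorem ends1_literalEdge (b : Bool) (q : Fin n × Fin m) :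
    ends1 n m clauses (literalEdge b q) = (xV q, freeEnd clauses b q) := by
  cases b <;> rfl

theorem freeEnd_ne {b : Bool} {q : Fin n × Fin m} {v : V1T n m} (hcV : cV q.2 ≠ v)
    (hv₀ : v₀V ≠ v) : freeEnd clauses b q ≠ v := by
  unfold freeEnd
  split_ifs
  exacts [hcV, hv₀]

theorem freeEnd_ne_xV (b : Bool) (q q' : Fin n × Fin m) : freeEnd clauses b q ≠ xV q' :=
  freeEnd_ne nofun nofun

theorem freeEnd_eq_cV_iff {b : Bool} {q : Fin n × Fin m} {j : Fin m} :
    freeEnd clauses b q = cV j ↔ ∃ t, literalEdge b q = clauseEdge clauses j t := by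
  simp only [clauseEdge, literalEdge_inj]
  unfold freeEnd
  split_ifs with h
  · rw [cV_injective.eq_iff]
    constructor
    · rintro rfl
      obtain ⟨t, ht⟩ := h
      exact ⟨t, by rw [ht], by rw [ht]⟩
    · rintro ⟨t, -, hq⟩
      exact congrArg Prod.snd hq
  · refine ⟨nofun, ?_⟩
    rintro ⟨t, rfl, rfl⟩
    exact absurd ⟨t, rfl⟩ h

theorem exists_eq_of_inc_xV {e : E1T n m} {q : Fin n × Fin m}
    (h : Inc (ends1 n m clauses) e (xV q)) : ∃ b, e = cycleEdge b q ∨ e = literalEdge b q := by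
  induction e using E1T.cases_gadget with
  | z q' =>
    rcases h with h | h <;> obtain rfl := xV_injective h
    exacts [⟨false, Or.inl rfl⟩, ⟨true, Or.inl (cycleEdge_true_finSucc _ _).symm⟩]
  | literal b q' =>
    rw [Inc, ends1_literalEdge, or_iff_left (freeEnd_ne_xV b q' q)] at h
    obtain rfl := xV_injective h
    exact ⟨b, Or.inr rfl⟩
  | _ => rcases h with h | h <;> cases h

theorem inc_literalEdge_cV_iff {b : Bool} {q : Fin n × Fin m} {j : Fin m} :
    Inc (ends1 n m clauses) (literalEdge b q) (cV j) ↔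
      ∃ t, literalEdge b q = clauseEdge clauses j t := by
  rw [Inc, ends1_literalEdge, or_iff_right nofun, freeEnd_eq_cV_iff]

theorem isVarEdge_and_inc_cV_iff {e : E1T n m} {j : Fin m} :
    IsVarEdge n m e ∧ Inc (ends1 n m clauses) e (cV j) ↔ ∃ t, e = clauseEdge clauses j t := by
  rw [isVarEdge_iff]
  constructor
  · rintro ⟨⟨b, q, rfl⟩, h⟩
    exact inc_literalEdge_cV_iff.1 h
  · rintro ⟨t, rfl⟩
    exact ⟨⟨_, _, rfl⟩, inc_literalEdge_cV_iff.2 ⟨t, rfl⟩⟩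

theorem eq_aE_or_exists_eq_clauseEdge_of_inc_cV {e : E1T n m} {j : Fin m}
    (h : Inc (ends1 n m clauses) e (cV j)) : e = aE j ∨ ∃ t, e = clauseEdge clauses j t := by
  induction e using E1T.cases_gadget with
  | literal b q => exact Or.inr (inc_literalEdge_cV_iff.1 h)
  | a j' =>
    rcases h with h | h <;> cases h
    exact Or.inl rfl
  | _ => rcases h with h | h <;> cases h

theorem eq_aE_of_inc_aV {e : E1T n m} {j : Fin m} (h : Inc (ends1 n m clauses) e (aV j)) :
    e = aE j := by
  induction e using E1T.cases_gadget with
  | literal b q =>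
    rw [Inc, ends1_literalEdge] at h
    exact absurd h (not_or.2 ⟨nofun, freeEnd_ne nofun nofun⟩)
  | _ => rcases h with h | h <;> cases h <;> rfl

theorem eq_parityE_of_inc_parityV {e : E1T n m} {p : PLift (cond1 n m)}
    (h : Inc (ends1 n m clauses) e (parityV p)) : e = parityE p := by
  induction e using E1T.cases_gadget with
  | literal b q =>
    rw [Inc, ends1_literalEdge] at h
    exact absurd h (not_or.2 ⟨nofun, freeEnd_ne nofun nofun⟩)
  | _ => rcases h with h | h <;> cases h <;> rfl

end Incidence

section Conflicts

variable {n m : ℕ} {clauses : Fin m → Fin 3 → Fin n × Bool}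

theorem forall_mem_C1_iff {P : Set (E1T n m) × V1T n m → Prop} :
    (∀ c ∈ C1 n m clauses, P c) ↔
      (∀ q, P ({cycleEdge true q, cycleEdge false q}, xV q)) ∧
      (∀ b q, P ({cycleEdge b q, literalEdge b q}, xV q)) ∧
      ∀ j t t', clauseEdge clauses j t ≠ clauseEdge clauses j t' →
        P ({clauseEdge clauses j t, clauseEdge clauses j t'}, cV j) := by
  constructor
  · refine fun H => ⟨?_, ?_, fun j t t' hne => ?_⟩
    · rintro ⟨i, l⟩
      obtain ⟨l, rfl⟩ := finSucc_surjective l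
      rw [cycleEdge_true_finSucc]
      exact H _ (Or.inl ⟨i, l, Or.inl rfl⟩)
    · rintro (_ | _) ⟨i, l⟩
      · exact H _ (Or.inl ⟨i, l, Or.inr (Or.inr rfl)⟩)
      · obtain ⟨l, rfl⟩ := finSucc_surjective l
        rw [cycleEdge_true_finSucc]
        exact H _ (Or.inl ⟨i, l, Or.inr (Or.inl rfl)⟩)
    · obtain ⟨hvar, hinc⟩ := isVarEdge_and_inc_cV_iff.2 ⟨t, rfl⟩
      obtain ⟨hvar', hinc'⟩ := isVarEdge_and_inc_cV_iff.2 ⟨t', rfl⟩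
      exact H _ (Or.inr ⟨j, _, _, hne, hvar, hvar', hinc, hinc', rfl⟩)
  · rintro ⟨hcycle, hliteral, hclause⟩ c
      (⟨i, l, rfl | rfl | rfl⟩ | ⟨j, e, e', hne, hvar, hvar', hinc, hinc', rfl⟩)
    · have h := hcycle (i, finSucc l)
      rwa [cycleEdge_true_finSucc] at h
    · have h := hliteral true (i, finSucc l)
      rwa [cycleEdge_true_finSucc] at h
    · exact hliteral false (i, l)
    · obtain ⟨t, rfl⟩ := isVarEdge_and_inc_cV_iff.1 ⟨hvar, hinc⟩
      obtain ⟨t', rfl⟩ := isVarEdge_and_inc_cV_iff.1 ⟨hvar', hinc'⟩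
      exact hclause j t t' hne

theorem conflictFree_iff {o : E1T n m → V1T n m} :
    (∀ c ∈ C1 n m clauses, ¬ ∀ e ∈ c.1, o e = c.2) ↔
      (∀ q, o (cycleEdge true q) = xV q → o (cycleEdge false q) ≠ xV q) ∧
      (∀ b q, o (cycleEdge b q) = xV q → o (literalEdge b q) ≠ xV q) ∧
      ∀ j t t', clauseEdge clauses j t ≠ clauseEdge clauses j t' →
        o (clauseEdge clauses j t) = cV j → o (clauseEdge clauses j t') ≠ cV j := by
  simp only [forall_mem_C1_iff, Set.mem_insert_iff, Set.mem_singleton_iff, forall_eq_or_imp,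
    forall_eq, not_and, ne_eq]

end Conflicts

section Assignments

variable {n m : ℕ} {clauses : Fin m → Fin 3 → Fin n × Bool} {A : Fin n → Bool}
  {o : E1T n m → V1T n m}

/-- At each cycle vertex of the gadget of `X_i`, the edges pointing to it are the ones prescribed
by the value `A i`. -/
structure Follows (A : Fin n → Bool) (o : E1T n m → V1T n m) : Prop where
  cycleEdge_eq_xV_iff : ∀ b q, o (cycleEdge b q) = xV q ↔ A q.1 = b
  literalEdge_eq_xV_iff : ∀ b q, o (literalEdge b q) = xV q ↔ A q.1 ≠ b

theorem Follows.eq_xV_iff (hA : Follows A o) (ho : IsOrient (ends1 n m clauses) o) {e : E1T n m}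
    {q : Fin n × Fin m} :
    o e = xV q ↔ e = cycleEdge (A q.1) q ∨ e = literalEdge (!A q.1) q := by
  constructor
  · intro he
    obtain ⟨b, rfl | rfl⟩ := exists_eq_of_inc_xV (ho.inc he)
    · exact Or.inl ((hA.cycleEdge_eq_xV_iff b q).1 he ▸ rfl)
    · exact Or.inr (Bool.eq_not_of_ne ((hA.literalEdge_eq_xV_iff b q).1 he).symm ▸ rfl)
  · rintro (rfl | rfl)
    · exact (hA.cycleEdge_eq_xV_iff _ q).2 rfl
    · exact (hA.literalEdge_eq_xV_iff _ q).2 (Bool.not_ne_self _).symm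

theorem Follows.literalEdge_eq_freeEnd_iff (hA : Follows A o)
    (ho : IsOrient (ends1 n m clauses) o) (b : Bool) (q : Fin n × Fin m) :
    o (literalEdge b q) = freeEnd clauses b q ↔ A q.1 = b := by
  have hsnd := ho.eq_snd_iff_ne_fst (e := literalEdge b q)
  rw [ends1_literalEdge] at hsnd
  rw [hsnd (freeEnd_ne_xV b q q).symm, Ne, hA.literalEdge_eq_xV_iff, not_not]

theorem Follows.clauseEdge_eq_cV_iff (hA : Follows A o) (ho : IsOrient (ends1 n m clauses) o)
    (j : Fin m) (t : Fin 3) :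
    o (clauseEdge clauses j t) = cV j ↔ A (clauses j t).1 = (clauses j t).2 := by
  rw [← hA.literalEdge_eq_freeEnd_iff ho _ ((clauses j t).1, j),
    freeEnd_eq_cV_iff.2 ⟨t, rfl⟩, clauseEdge]

theorem Follows.conflictFree (hA : Follows A o) (ho : IsOrient (ends1 n m clauses) o)
    (hsat : ∀ j, ∃! t, A (clauses j t).1 = (clauses j t).2) :
    ∀ c ∈ C1 n m clauses, ¬ ∀ e ∈ c.1, o e = c.2 := by
  refine conflictFree_iff.2 ⟨fun q htrue hfalse => ?_, fun b q hcycle => ?_,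
    fun j t t' hne ht ht' => ?_⟩
  · rw [hA.cycleEdge_eq_xV_iff] at htrue hfalse
    exact Bool.false_ne_true (hfalse.symm.trans htrue)
  · rw [Ne, hA.literalEdge_eq_xV_iff, not_not]
    exact (hA.cycleEdge_eq_xV_iff b q).1 hcycle
  · rw [hA.clauseEdge_eq_cV_iff ho] at ht ht'
    exact hne (congrArg _ ((hsat j).unique ht ht'))

theorem Follows.even_indeg_xV (hA : Follows A o) (ho : IsOrient (ends1 n m clauses) o)
    (q : Fin n × Fin m) : Even (indeg o (xV q)) :=
  even_indeg_of_eq_pair (cycleEdge_ne_literalEdge _ _ q q) fun _ => hA.eq_xV_iff ho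

theorem Follows.even_indeg_cV (hA : Follows A o) (ho : IsOrient (ends1 n m clauses) o) {j : Fin m}
    (hj : ∃! t, A (clauses j t).1 = (clauses j t).2) (haE : o (aE j) = cV j) :
    Even (indeg o (cV j)) := by
  obtain ⟨t, ht, hunique⟩ := hj
  refine even_indeg_of_eq_pair (e₂ := clauseEdge clauses j t) (aE_ne_literalEdge j _ _)
    fun e => ⟨fun he => ?_, ?_⟩
  · refine (eq_aE_or_exists_eq_clauseEdge_of_inc_cV (ho.inc he)).imp_right ?_
    rintro ⟨t', rfl⟩
    exact congrArg _ (hunique t' ((hA.clauseEdge_eq_cV_iff ho j t').1 he))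
  · rintro (rfl | rfl)
    exacts [haE, (hA.clauseEdge_eq_cV_iff ho j t).2 ht]

theorem Follows.even_indeg (hA : Follows A o) (ho : IsOrient (ends1 n m clauses) o)
    (hsat : ∀ j, ∃! t, A (clauses j t).1 = (clauses j t).2) (haE : ∀ j, o (aE j) = cV j)
    (hparityE : ∀ p, o (parityE p) = v₀V) (v : V1T n m) : Even (indeg o v) := by
  refine even_indeg_of_forall_ne_even (v₀ := v₀V) even_card_E1T (fun v hv => ?_) v
  rcases v with q | j | j | _ | p
  · exact hA.even_indeg_xV ho q
  · exact hA.even_indeg_cV ho (hsat j) (haE j)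
  · refine (ho.even_indeg_iff_of_pendant fun e => eq_aE_of_inc_aV).2 ?_
    rw [haE]
    nofun
  · exact absurd rfl hv
  · refine (ho.even_indeg_iff_of_pendant fun e => eq_parityE_of_inc_parityV).2 ?_
    rw [hparityE]
    nofun

/-- The edges that the assignment `A` directs to their second endpoint in `ends1`. -/
def pointsToSnd (A : Fin n → Bool) : E1T n m → Bool
  | Sum.inl (Sum.inl q) => A q.1
  | Sum.inl (Sum.inr (Sum.inl q)) => A q.1
  | Sum.inl (Sum.inr (Sum.inr (Sum.inl q))) => !A q.1
  | Sum.inl (Sum.inr (Sum.inr (Sum.inr _))) => true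
  | Sum.inr _ => false

theorem pointsToSnd_literalEdge (A : Fin n → Bool) (b : Bool) (q : Fin n × Fin m) :
    pointsToSnd A (literalEdge b q) = (A q.1 == b) := by
  cases b
  · exact (beq_false _).symm
  · exact (beq_true _).symm

theorem xV_ne_xV_finSucc (hm : m ≠ 1) (i : Fin n) (l : Fin m) : xV (i, l) ≠ xV (i, finSucc l) :=
  fun h => finSucc_ne_self hm l (Prod.ext_iff.1 (xV_injective h)).2.symm

theorem follows_orientBy_pointsToSnd (hm : m ≠ 1) (A : Fin n → Bool) :
    Follows A (orientBy (ends1 n m clauses) (pointsToSnd A)) where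
  cycleEdge_eq_xV_iff := by
    rintro (_ | _) ⟨i, l⟩
    · exact orientBy_eq_fst_iff (e := cycleEdge false (i, l)) (xV_ne_xV_finSucc hm i l)
    · obtain ⟨l, rfl⟩ := finSucc_surjective l
      rw [cycleEdge_true_finSucc]
      exact orientBy_eq_snd_iff (e := cycleEdge false (i, l)) (xV_ne_xV_finSucc hm i l)
  literalEdge_eq_xV_iff b q := by
    have hfst := orientBy_eq_fst_iff (ends := ends1 n m clauses) (f := pointsToSnd A)
      (e := literalEdge b q)
    rw [ends1_literalEdge, pointsToSnd_literalEdge, beq_eq_false_iff_ne] at hfst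
    exact hfst (freeEnd_ne_xV b q q).symm

theorem IsOrient.cycleEdge_true_eq_xV_iff (hm : m ≠ 1) (ho : IsOrient (ends1 n m clauses) o)
    (i : Fin n) (l : Fin m) :
    o (cycleEdge true (i, finSucc l)) = xV (i, finSucc l) ↔
      o (cycleEdge false (i, l)) ≠ xV (i, l) := by
  rw [cycleEdge_true_finSucc]
  exact ho.eq_snd_iff_ne_fst (e := cycleEdge false (i, l)) (xV_ne_xV_finSucc hm i l)

theorem IsOrient.exists_forall_cycleEdge_eq_xV_iff (hm : m ≠ 1)
    (ho : IsOrient (ends1 n m clauses) o)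
    (hcycle : ∀ q, o (cycleEdge true q) = xV q → o (cycleEdge false q) ≠ xV q) :
    ∃ A : Fin n → Bool, ∀ b q, o (cycleEdge b q) = xV q ↔ A q.1 = b := by
  have propagate (i : Fin n) (l l' : Fin m) (h : o (cycleEdge true (i, l)) = xV (i, l)) :
      o (cycleEdge true (i, l')) = xV (i, l') :=
    of_forall_finSucc (P := fun l => o (cycleEdge true (i, l)) = xV (i, l))
      (fun k hk => (ho.cycleEdge_true_eq_xV_iff hm i k).2 (hcycle (i, k) hk)) h l'
  let A (i : Fin n) : Bool := decide (∀ l, o (cycleEdge true (i, l)) = xV (i, l))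
  have hA (i : Fin n) (l : Fin m) : o (cycleEdge true (i, l)) = xV (i, l) ↔ A i = true :=
    ⟨fun h => decide_eq_true fun l' => propagate i l l' h, fun h => of_decide_eq_true h l⟩
  refine ⟨A, ?_⟩
  rintro (_ | _) ⟨i, l⟩
  · rw [← not_iff_not, ← Ne, ← ho.cycleEdge_true_eq_xV_iff hm, hA, Bool.not_eq_false]
  · exact hA i l

theorem IsOrient.exists_follows (hm : m ≠ 1) (ho : IsOrient (ends1 n m clauses) o)
    (heven : ∀ q, Even (indeg o (xV q)))
    (hcycle : ∀ q, o (cycleEdge true q) = xV q → o (cycleEdge false q) ≠ xV q)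
    (hliteral : ∀ b q, o (cycleEdge b q) = xV q → o (literalEdge b q) ≠ xV q) :
    ∃ A, Follows A o := by
  obtain ⟨A, hA⟩ := ho.exists_forall_cycleEdge_eq_xV_iff hm hcycle
  have literal_ne (b : Bool) (q : Fin n × Fin m) (h : o (literalEdge b q) = xV q) : A q.1 ≠ b :=
    fun hb => hliteral b q ((hA b q).2 hb) h
  refine ⟨A, hA, fun b q => ⟨literal_ne b q, fun hb => ?_⟩⟩
  obtain ⟨e, hne, he⟩ := exists_ne_of_even_indeg (heven q) ((hA (A q.1) q).2 rfl)
  obtain ⟨b', rfl | rfl⟩ := exists_eq_of_inc_xV (ho.inc he)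
  · exact absurd ((hA b' q).1 he ▸ rfl) hne
  · obtain rfl : b' = b :=
      (Bool.eq_not_of_ne (literal_ne b' q he).symm).trans (Bool.eq_not_of_ne hb.symm).symm
    exact he

theorem IsOrient.exists_clauseEdge_eq_cV (ho : IsOrient (ends1 n m clauses) o) {j : Fin m}
    (haV : Even (indeg o (aV j))) (hcV : Even (indeg o (cV j))) :
    ∃ t, o (clauseEdge clauses j t) = cV j := by
  have haE : o (aE j) = cV j := (ho (aE j)).resolve_left
    ((ho.even_indeg_iff_of_pendant fun e => eq_aE_of_inc_aV).1 haV)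
  obtain ⟨e, hne, he⟩ := exists_ne_of_even_indeg hcV haE
  obtain ⟨t, rfl⟩ := (eq_aE_or_exists_eq_clauseEdge_of_inc_cV (ho.inc he)).resolve_left hne
  exact ⟨t, he⟩

end Assignments

theorem stmt_1_general (n m : ℕ) (hm : m ≠ 1) (clauses : Fin m → Fin 3 → Fin n × Bool)
    (hclauses : ∀ j, Function.Injective (clauses j)) :
    (∃ A : Fin n → Bool, ∀ j : Fin m, ∃! t : Fin 3, A (clauses j t).1 = (clauses j t).2) ↔
    (∃ o : E1T n m → V1T n m, IsOrient (ends1 n m clauses) o ∧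
        (∀ x, Even (indeg o x)) ∧
        ∀ c ∈ C1 n m clauses, ¬ ∀ e ∈ c.1, o e = c.2) := by
  constructor
  · rintro ⟨A, hsat⟩
    have ho := isOrient_orientBy (ends1 n m clauses) (pointsToSnd A)
    have hA := follows_orientBy_pointsToSnd (clauses := clauses) hm A
    exact ⟨_, ho, hA.even_indeg ho hsat (fun _ => rfl) (fun _ => rfl), hA.conflictFree ho hsat⟩
  · rintro ⟨o, ho, heven, hconflict⟩
    obtain ⟨hcycle, hliteral, hclause⟩ := conflictFree_iff.1 hconflict
    obtain ⟨A, hA⟩ := ho.exists_follows hm (fun q => heven (xV q)) hcycle hliteral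
    refine ⟨A, fun j => ?_⟩
    obtain ⟨t, ht⟩ := ho.exists_clauseEdge_eq_cV (heven (aV j)) (heven (cV j))
    refine ⟨t, (hA.clauseEdge_eq_cV_iff ho j t).1 ht, fun t' ht' => ?_⟩
    by_contra hne
    exact hclause j t' t ((clauseEdge_injective (hclauses j)).ne hne)
      ((hA.clauseEdge_eq_cV_iff ho j t').2 ht') ht

/-- a (1-in-3)-SAT instance with `m ≥ 3` clauses (three literals on three
distinct variables per clause) is satisfiable with exactly one true literal per clause iff
the constructed multigraph `G_I` has an even orientation violating no subset conflict pair
of `C_I` (a subset conflict `({e₁,e₂},v)` is violated when both `e₁` and `e₂` have head `v`). -/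
theorem stmt_1 (n m : ℕ) (hm : 3 ≤ m) (clauses : Fin m → Fin 3 → Fin n × Bool)
    (hdistinct : ∀ j, Function.Injective fun t => (clauses j t).1) :
    (∃ A : Fin n → Bool, ∀ j : Fin m, ∃! t : Fin 3, A (clauses j t).1 = (clauses j t).2) ↔
    (∃ o : E1T n m → V1T n m, IsOrient (ends1 n m clauses) o ∧
        (∀ x, Even (indeg o x)) ∧
        ∀ c ∈ C1 n m clauses, ¬ ∀ e ∈ c.1, o e = c.2) :=
  stmt_1_general n m (by omega) clauses fun j _ _ h => hdistinct j (congrArg Prod.fst h)
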